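/- Let A and B be M×M Hermitian positive semidefinite complex matrices. Then det(I_M + A + B) ≤ det(I_M + A) · det(I_M + B) (all three determinants being positive reals). Consequently, for M×M complex matrices H_{21}, H_{22} and positive semidefinite Q_1, Q_2, the achievable rate satisfies det(I_M + H_{21} Q_1 H_{21}^H + H_{22} Q_2 H_{22}^H) / det(I_M + H_{21} Q_1 H_{21}^H) ≤ det(I_M + H_{22} Q_2 H_{22}^H); that is, the rate of the information-decoding receiver is maximized over Q_1 by the choice Q_1 = 0. -/

import Mathlib

open Matrix
open scoped ComplexOrder

lemma det_one_add_ge {n : ℕ} (Z : Matrix (Fin n) (Fin n) ℂ) (hZ : Z.PosSemidef) :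
    1 ≤ (1 + Z).det := by
  have h := hZ.isHermitian.spectral_theorem
  rw [Unitary.conjStarAlgAut_apply] at h
  set U := hZ.isHermitian.eigenvectorUnitary
  have h1 : (1 + Z).det = ∏ i, (1 + (hZ.isHermitian.eigenvalues i : ℂ)) := by
    have hd : (1 + diagonal ((RCLike.ofReal : ℝ → ℂ) ∘ hZ.isHermitian.eigenvalues)).det
        = ∏ i, (1 + (hZ.isHermitian.eigenvalues i : ℂ)) := by
      rw [← diagonal_one, diagonal_add, det_diagonal]
      rfl
    rw [← hd]
    conv_lhs => rw [h, mul_assoc, det_one_add_mul_comm, mul_assoc]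
    rw [Unitary.coe_star_mul_self, mul_one]
  rw [h1]
  have h2 : (1 : ℝ) ≤ ∏ i, (1 + hZ.isHermitian.eigenvalues i) := by
    refine Finset.prod_induction _ (fun x : ℝ => 1 ≤ x)
      (fun a b ha hb => one_le_mul_of_one_le_of_one_le ha hb) le_rfl ?_
    intro i _
    have := hZ.eigenvalues_nonneg i
    linarith
  exact_mod_cast h2

lemma exists_sq {n : ℕ} (B : Matrix (Fin n) (Fin n) ℂ) (hB : B.PosSemidef) :
    ∃ C : Matrix (Fin n) (Fin n) ℂ, B = Cᴴ * C := by
  open scoped MatrixOrder in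
  exact CStarAlgebra.nonneg_iff_eq_star_mul_self.mp hB.nonneg

lemma det_add_eq {n : ℕ} (X C : Matrix (Fin n) (Fin n) ℂ) (hX : X.PosDef) :
    (X + Cᴴ * C).det = X.det * (1 + C * X⁻¹ * Cᴴ).det := by
  have hu : IsUnit X.det := hX.det_pos.ne'.isUnit
  have : X + Cᴴ * C = X * (1 + X⁻¹ * Cᴴ * C) := by
    rw [mul_add, mul_one, mul_assoc, mul_nonsing_inv_cancel_left _ _ hu]
  rw [this, det_mul, det_one_add_mul_comm, mul_assoc]

lemma det_mono {n : ℕ} (X Y : Matrix (Fin n) (Fin n) ℂ) (hX : X.PosDef) (hY : Y.PosSemidef) :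
    X.det ≤ (X + Y).det := by
  obtain ⟨C, rfl⟩ := exists_sq Y hY
  rw [det_add_eq X C hX]
  exact le_mul_of_one_le_right hX.det_pos.le
    (det_one_add_ge _ (hX.inv.posSemidef.mul_mul_conjTranspose_same C))

lemma det_sub {n : ℕ} (A B : Matrix (Fin n) (Fin n) ℂ) (hA : A.PosSemidef)
    (hB : B.PosSemidef) : (1 + A + B).det ≤ (1 + A).det * (1 + B).det := by
  have hP : (1 + A).PosDef := PosDef.one.add_posSemidef hA
  have hu : IsUnit (1 + A).det := hP.det_pos.ne'.isUnit
  obtain ⟨C, rfl⟩ := exists_sq B hB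
  rw [det_add_eq _ C hP, det_one_add_mul_comm Cᴴ C]
  refine mul_le_mul_of_nonneg_left ?_ hP.det_pos.le
  have h1 : (1 - (1 + A)⁻¹).PosSemidef := by
    have h2 : (A + Aᴴ * A).PosSemidef := hA.add (posSemidef_conjTranspose_mul_self A)
    have h3 := h2.mul_mul_conjTranspose_same (1 + A)⁻¹
    have h4 : A + Aᴴ * A = A * (1 + A) := by rw [hA.isHermitian.eq, mul_add, mul_one]
    have h5 : (1 + A)⁻¹ᴴ = (1 + A)⁻¹ := hP.inv.isHermitian.eq
    rw [h5, h4, mul_assoc, mul_assoc, mul_nonsing_inv _ hu, mul_one] at h3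
    have h6 : (1 + A)⁻¹ * A = 1 - (1 + A)⁻¹ := by
      have := nonsing_inv_mul _ hu
      rw [mul_add, mul_one] at this
      exact eq_sub_of_add_eq' this
    rwa [h6] at h3
  have h7 : (1 + C * (1 + A)⁻¹ * Cᴴ).PosDef :=
    PosDef.one.add_posSemidef (hP.inv.posSemidef.mul_mul_conjTranspose_same C)
  have h8 := det_mono _ _ h7 (h1.mul_mul_conjTranspose_same C)
  have h9 : 1 + C * (1 + A)⁻¹ * Cᴴ + C * (1 - (1 + A)⁻¹) * Cᴴ = 1 + C * Cᴴ := by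
    noncomm_ring
  rwa [h9] at h8

/-- For Hermitian positive semidefinite `M × M` complex matrices `A, B`, the
determinants `det (I + A)`, `det (I + B)`, `det (I + A + B)` are positive reals and
`det (I + A + B) ≤ det (I + A) · det (I + B)`.  Consequently, for channels `H₂₁, H₂₂` and
PSD covariances `Q₁, Q₂`,
`det (I + H₂₁Q₁H₂₁ᴴ + H₂₂Q₂H₂₂ᴴ) / det (I + H₂₁Q₁H₂₁ᴴ) ≤ det (I + H₂₂Q₂H₂₂ᴴ)`,
i.e. the information rate is maximized over `Q₁` by `Q₁ = 0`. -/
theorem stmt5 (M : ℕ) :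
    (∀ A B : Matrix (Fin M) (Fin M) ℂ, A.PosSemidef → B.PosSemidef →
      (0 < (1 + A).det.re ∧ (1 + A).det.im = 0) ∧
      (0 < (1 + B).det.re ∧ (1 + B).det.im = 0) ∧
      (0 < (1 + A + B).det.re ∧ (1 + A + B).det.im = 0) ∧
      (1 + A + B).det.re ≤ (1 + A).det.re * (1 + B).det.re) ∧
    (∀ H21 H22 Q1 Q2 : Matrix (Fin M) (Fin M) ℂ, Q1.PosSemidef → Q2.PosSemidef →
      (1 + H21 * Q1 * H21ᴴ + H22 * Q2 * H22ᴴ).det.re / (1 + H21 * Q1 * H21ᴴ).det.re ≤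
        (1 + H22 * Q2 * H22ᴴ).det.re) := by
  have key : ∀ A B : Matrix (Fin M) (Fin M) ℂ, A.PosSemidef → B.PosSemidef →
      (0 < (1 + A).det.re ∧ (1 + A).det.im = 0) ∧
      (0 < (1 + B).det.re ∧ (1 + B).det.im = 0) ∧
      (0 < (1 + A + B).det.re ∧ (1 + A + B).det.im = 0) ∧
      (1 + A + B).det.re ≤ (1 + A).det.re * (1 + B).det.re := by
    intro A B hA hB
    have hp : ∀ Z : Matrix (Fin M) (Fin M) ℂ, Z.PosSemidef →
        0 < (1 + Z).det.re ∧ (1 + Z).det.im = 0 := by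
      intro Z hZ
      have := (Complex.lt_def.mp (PosDef.one.add_posSemidef hZ).det_pos)
      exact ⟨this.1, this.2.symm⟩
    have hab := hp (A + B) (hA.add hB)
    rw [← add_assoc] at hab
    refine ⟨hp A hA, hp B hB, hab, ?_⟩
    have h := (Complex.le_def.mp (det_sub A B hA hB)).1
    rwa [Complex.mul_re, (hp A hA).2, zero_mul, sub_zero] at h
  refine ⟨key, ?_⟩
  intro H21 H22 Q1 Q2 h1 h2
  obtain ⟨ha, -, -, h⟩ := key _ _ (h1.mul_mul_conjTranspose_same H21)
    (h2.mul_mul_conjTranspose_same H22)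
  rw [div_le_iff₀ ha.1, mul_comm]
  exact h
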